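/- Let α > 0 be real, β ∈ ℂ, n ∈ ℕ, f₁,…,f_n ∈ ℂ and b₀,…,b_n ∈ ℂ, and assume n + β + αj ≠ 0 for all 0 ≤ j ≤ n. Then Σ_{k=0}^n b_{n−k} A_{−(n+β)/α, k}(f₁,…,f_k) = Σ_{k=0}^n C(−(n+β)/α, k) b_{n−k} Σ_{j=0}^k (−1)^{k+j} ((n+β+αk)/(n+β+αj)) C(k,j) A_{j,k}(f₁,…,f_k). (Equivalently: the coefficients c_n of Laplace's method given by Wojdylo's potential-polynomial formula coincide with the formula of Corollary 2 of the paper.) -/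

import Mathlib

open Finset

/-- Partial ordinary Bell polynomials: `obell f n k` is the coefficient of `x^n` in
`(∑_{m ≥ 1} f m * x^m)^k`, i.e. `B_{n,k}(f₁, …, f_{n-k+1})`. -/
noncomputable def obell (f : ℕ → ℂ) (n k : ℕ) : ℂ :=
  PowerSeries.coeff (R := ℂ) n ((PowerSeries.mk fun m => if m = 0 then 0 else f m) ^ k)

/-- Generalized binomial coefficient `C(ρ, k) = ρ(ρ-1)⋯(ρ-k+1)/k!`. -/
noncomputable def gbinom (ρ : ℂ) (k : ℕ) : ℂ :=
  (∏ i ∈ Finset.range k, (ρ - i)) / (Nat.factorial k : ℂ)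

/-- Ordinary potential polynomials `A_{ρ,n}(f₁,…,f_n) = ∑_{k=0}^n C(ρ,k) B_{n,k}`. -/
noncomputable def opot (ρ : ℂ) (f : ℕ → ℂ) (n : ℕ) : ℂ :=
  ∑ k ∈ Finset.range (n + 1), gbinom ρ k * obell f n k

/-!
For fixed `f` and `k`, the potential polynomial `A_{ρ,k}` is a polynomial in `ρ` of degree at
most `k`, so it is determined by its values at the nodes `0, …, k` through Lagrange interpolation.
At equally spaced nodes the barycentric weights are signed binomial coefficients divided by `k!`,
and the nodal polynomial is `ρ(ρ-1)⋯(ρ-k) = k! C(ρ,k) (ρ-k)`. Now put `ρ = -(n+β)/α`, so that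
`ρ - j = -(n+β+αj)/α`.
-/

section Interpolation

open Polynomial
open scoped Nat

theorem prod_erase_range_natCast_sub (R : Type*) [CommRing R] (j m : ℕ) :
    ∏ i ∈ (range (j + m + 1)).erase j, ((j : R) - i) = (-1) ^ m * (j ! * m !) := by
  induction m with
  | zero =>
    have below_j : ∏ i ∈ range j, ((j : R) - i) = j ! := by
      rw [← descPochhammer_eval_eq_prod_range, descPochhammer_eval_eq_descFactorial,
        Nat.descFactorial_self]
    simp [range_add_one, below_j]
  | succ m ih =>
    have new_node : (range (j + (m + 1) + 1)).erase j =
        insert (j + m + 1) ((range (j + m + 1)).erase j) := by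
      rw [range_add_one, erase_insert_of_ne (by lia), ← add_assoc]
    rw [new_node, prod_insert (by simp), ih, Nat.factorial_succ]
    push_cast
    ring

variable {K : Type*} [Field K] [CharZero K]

theorem nodalWeight_range_natCast {n j : ℕ} (hj : j ≤ n) :
    Lagrange.nodalWeight (range (n + 1)) (Nat.cast : ℕ → K) j =
      (-1) ^ (n + j) * n.choose j / n ! := by
  obtain ⟨m, rfl⟩ := Nat.exists_eq_add_of_le hj
  have sign : (-1 : K) ^ (j + m + j) = (-1) ^ m := by
    rw [show j + m + j = m + 2 * j by ring, pow_add, pow_mul, neg_one_sq, one_pow, mul_one]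
  have factorial_ne (i : ℕ) : (i ! : K) ≠ 0 := mod_cast i.factorial_ne_zero
  rw [Lagrange.nodalWeight, prod_inv_distrib, prod_erase_range_natCast_sub, sign, mul_inv,
    ← inv_pow, inv_neg_one, Nat.cast_add_choose, mul_div_assoc,
    div_div_cancel_left' (factorial_ne _)]

theorem eval_nodal_range_natCast {R : Type*} [CommRing R] (n : ℕ) (x : R) :
    (Lagrange.nodal (range (n + 1)) (Nat.cast : ℕ → R)).eval x =
      (descPochhammer R n).eval x * (x - n) := by
  rw [Lagrange.eval_nodal, prod_range_succ, descPochhammer_eval_eq_prod_range]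

theorem eval_eq_sum_eval_natCast {P : K[X]} {n : ℕ} (hP : P.degree ≤ n) {x : K}
    (hx : ∀ j ≤ n, x ≠ j) :
    P.eval x = (descPochhammer K n).eval x / n ! *
      ∑ j ∈ range (n + 1), (-1) ^ (n + j) * ((x - n) / (x - j)) * n.choose j * P.eval (j : K) := by
  have degree_lt : P.degree < #(range (n + 1)) := by
    rw [card_range]
    exact hP.trans_lt (mod_cast n.lt_succ_self)
  conv_lhs =>
    rw [Lagrange.eq_interpolate Nat.cast_injective.injOn degree_lt,
      Lagrange.eval_interpolate_not_at_node _ fun j hj ↦ hx j (mem_range_succ_iff.mp hj),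
      eval_nodal_range_natCast]
  rw [mul_sum, mul_sum]
  refine sum_congr rfl fun j hj ↦ ?_
  rw [nodalWeight_range_natCast (mem_range_succ_iff.mp hj)]
  ring

end Interpolation

section PotentialPolynomial

open Polynomial
open scoped Nat

/-- The ordinary potential polynomial `A_{ρ,n}(f₁,…,f_n)` as a polynomial in `ρ`. -/
noncomputable def opotPoly (f : ℕ → ℂ) (n : ℕ) : ℂ[X] :=
  ∑ k ∈ range (n + 1), C (obell f n k / k !) * descPochhammer ℂ k

theorem gbinom_eq_eval_descPochhammer (ρ : ℂ) (k : ℕ) :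
    gbinom ρ k = (descPochhammer ℂ k).eval ρ / k ! := by
  rw [gbinom, descPochhammer_eval_eq_prod_range]

theorem eval_opotPoly (f : ℕ → ℂ) (n : ℕ) (ρ : ℂ) : (opotPoly f n).eval ρ = opot ρ f n := by
  simp only [opotPoly, opot, gbinom_eq_eval_descPochhammer, eval_finsetSum, eval_mul, eval_C]
  exact sum_congr rfl fun k _ ↦ by ring

theorem degree_opotPoly_le (f : ℕ → ℂ) (n : ℕ) : (opotPoly f n).degree ≤ n := by
  refine natDegree_le_iff_degree_le.mp <| natDegree_sum_le_of_forall_le _ _ fun k hk ↦ ?_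
  calc (C (obell f n k / k !) * descPochhammer ℂ k).natDegree
      ≤ (descPochhammer ℂ k).natDegree := natDegree_C_mul_le _ _
    _ = k := descPochhammer_natDegree ℂ k
    _ ≤ n := mem_range_succ_iff.mp hk

theorem opot_eq_sum_opot_natCast {ρ : ℂ} (f : ℕ → ℂ) {n : ℕ} (hρ : ∀ j : ℕ, j ≤ n → ρ ≠ j) :
    opot ρ f n = gbinom ρ n * ∑ j ∈ range (n + 1),
      (-1) ^ (n + j) * ((ρ - n) / (ρ - j)) * n.choose j * opot j f n := by
  simpa only [eval_opotPoly, ← gbinom_eq_eval_descPochhammer]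
    using eval_eq_sum_eval_natCast (degree_opotPoly_le f n) hρ

end PotentialPolynomial

theorem wojdylo_eq_corollary_general {α : ℂ} (hα : α ≠ 0) (β : ℂ) (n : ℕ) (f b : ℕ → ℂ)
    (hne : ∀ j : ℕ, j ≤ n → n + β + α * j ≠ 0) :
    ∑ k ∈ range (n + 1), b (n - k) * opot (-((n + β) / α)) f k =
      ∑ k ∈ range (n + 1), gbinom (-((n + β) / α)) k * b (n - k) *
        ∑ j ∈ range (k + 1), (-1) ^ (k + j) *
          ((n + β + α * k) / (n + β + α * j)) * k.choose j * opot j f k := by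
  set ρ : ℂ := -((n + β) / α) with ρ_def
  have denom_eq (j : ℕ) : n + β + α * j = -α * (ρ - j) := by
    rw [ρ_def]
    field_simp
    ring
  simp only [denom_eq, mul_div_mul_left _ _ (neg_ne_zero.mpr hα)] at hne ⊢
  refine sum_congr rfl fun k hk ↦ ?_
  have ρ_ne (j : ℕ) (hj : j ≤ k) : ρ ≠ j :=
    sub_ne_zero.mp <| right_ne_zero_of_mul <| hne j <| hj.trans <| mem_range_succ_iff.mp hk
  rw [opot_eq_sum_opot_natCast f ρ_ne]
  ring

/-- Wojdylo's potential-polynomial form of the coefficients of Laplace's method coincides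
with the formula of Corollary 2:
`∑_{k=0}^n b_{n-k} A_{-(n+β)/α, k} = ∑_{k=0}^n C(-(n+β)/α, k) b_{n-k}
  ∑_{j=0}^k (-1)^{k+j} ((n+β+αk)/(n+β+αj)) C(k,j) A_{j,k}`. -/
theorem wojdylo_eq_corollary (α : ℝ) (hα : 0 < α) (β : ℂ) (n : ℕ) (f : ℕ → ℂ) (b : ℕ → ℂ)
    (hne : ∀ j : ℕ, j ≤ n → (n : ℂ) + β + (α : ℂ) * (j : ℂ) ≠ 0) :
    ∑ k ∈ Finset.range (n + 1), b (n - k) * opot (-(((n : ℂ) + β) / (α : ℂ))) f k =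
      ∑ k ∈ Finset.range (n + 1), gbinom (-(((n : ℂ) + β) / (α : ℂ))) k * b (n - k) *
        ∑ j ∈ Finset.range (k + 1), (-1 : ℂ) ^ (k + j) *
          (((n : ℂ) + β + (α : ℂ) * (k : ℂ)) / ((n : ℂ) + β + (α : ℂ) * (j : ℂ))) *
          (Nat.choose k j : ℂ) * opot (j : ℂ) f k :=
  wojdylo_eq_corollary_general (mod_cast hα.ne') β n f b hne
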